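/- arXiv:2511.08097 — 2 statements merged into one kernel-verified Lean document; each statement's English description precedes it below -/
import Mathlib

section
/- There exists a terminal vector μ = (μ^{(1)},…,μ^{(N)}) with μ^{(n)} : S_n → ℝ such that the rotated cost is nonnegative on the whole budget-feasible set: for every budget-feasible concatenation y of state-action vectors, g* − (1/N)∑_n ∑_{s,a} r_n(s,a)·y^{(n)}(s,a) + (1/N)∑_n ∑_s μ^{(n)}(s)·[(y^{(n)}_0+y^{(n)}_1)(s) − (y^{(n)}_0·P_n^0 + y^{(n)}_1·P_n^1)(s)] ≥ 0, with equality when y is an optimal solution of the relaxed fixed-point LP (such an optimal solution exists). In other words, the fixed-point problem is dissipative with respect to its optimal fixed point, with storage function x ↦ (1/N)∑_n μ^{(n)}·x^{(n)}. -/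
open Finset Filter

section RMAB

variable {N : ℕ} {S : Fin N → Type} [∀ n, Fintype (S n)] [∀ n, DecidableEq (S n)]

/-- A state-action vector on a finite state space: nonnegative entries summing to one. -/
def IsSA {σ : Type} [Fintype σ] (y : σ → Bool → ℝ) : Prop :=
  (∀ s a, 0 ≤ y s a) ∧ (∑ s, (y s false + y s true)) = 1

/-- A probability vector on a finite state space. -/
def IsProbVec {σ : Type} [Fintype σ] (x : σ → ℝ) : Prop :=
  (∀ s, 0 ≤ x s) ∧ (∑ s, x s) = 1

/-- A row-stochastic matrix. -/
def RowStochastic {σ : Type} [Fintype σ] (P : σ → σ → ℝ) : Prop :=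
  (∀ s s', 0 ≤ P s s') ∧ ∀ s, (∑ s', P s s') = 1

/-- The next-state row vector `y₀·P⁰ + y₁·P¹`. -/
noncomputable def nextVec {σ : Type} [Fintype σ] (P : Bool → σ → σ → ℝ) (y : σ → Bool → ℝ) (s' : σ) : ℝ :=
  ∑ s, (y s false * P false s s' + y s true * P true s s')

/-- Budget feasibility of a concatenation of state-action vectors: `∑ₙ ‖y⁽ⁿ⁾₁‖₁ ≤ Nα`. -/
def BudgetFeasible (α : ℝ) (y : ∀ n, S n → Bool → ℝ) : Prop :=
  (∑ n, ∑ s, y n s true) ≤ (N : ℝ) * α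

/-- The normalized reward `(1/N)∑ₙ∑ₛₐ rₙ(s,a)·y⁽ⁿ⁾(s,a)`. -/
noncomputable def lpReward (r : ∀ n, S n → Bool → ℝ) (y : ∀ n, S n → Bool → ℝ) : ℝ :=
  (1 / (N : ℝ)) * ∑ n, ∑ s, (r n s false * y n s false + r n s true * y n s true)

/-- Feasibility for the relaxed fixed-point LP. -/
def FPFeasible (P : ∀ n, Bool → S n → S n → ℝ) (α : ℝ) (y : ∀ n, S n → Bool → ℝ) : Prop :=
  (∀ n, IsSA (y n)) ∧ BudgetFeasible α y ∧
    ∀ n s', y n s' false + y n s' true = nextVec (P n) (y n) s'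

/-- The gain `g*`: optimal value of the relaxed fixed-point LP. -/
noncomputable def gain (P : ∀ n, Bool → S n → S n → ℝ) (r : ∀ n, S n → Bool → ℝ)
    (α : ℝ) : ℝ :=
  sSup {v | ∃ y : ∀ n, S n → Bool → ℝ, FPFeasible P α y ∧ v = lpReward r y}

/-- A dissipative multiplier. -/
def Dissipative (P : ∀ n, Bool → S n → S n → ℝ) (r : ∀ n, S n → Bool → ℝ) (α : ℝ)
    (μ : ∀ n, S n → ℝ) : Prop :=
  ∀ y : ∀ n, S n → Bool → ℝ, (∀ n, IsSA (y n)) → BudgetFeasible α y →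
    lpReward r y - gain P r α ≤
      (1 / (N : ℝ)) * ∑ n, ∑ s, μ n s * ((y n s false + y n s true) - nextVec (P n) (y n) s)

/-- The `k`-step kernel `P^{a₁}⋯P^{a_k}` for a word of actions. -/
noncomputable def wordKernel {σ : Type} [Fintype σ] [DecidableEq σ] (P : Bool → σ → σ → ℝ) :
    List Bool → σ → σ → ℝ
  | [], s, s' => if s = s' then 1 else 0
  | a :: w, s, s' => ∑ s'', P a s s'' * wordKernel P w s'' s'

/-- The ergodicity coefficient `ρ_k`. -/
noncomputable def ergCoef (P : ∀ n, Bool → S n → S n → ℝ) (k : ℕ) : ℝ :=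
  sInf {v | ∃ (n : Fin N) (s s' : S n) (w : List Bool), w.length = k ∧
    v = ∑ s'', min (wordKernel (P n) w s s'')
      (wordKernel (P n) (List.replicate k false) s' s'')}

/-- The sup-norm `max_{n,s} |μ⁽ⁿ⁾(s)|` of a terminal vector. -/
noncomputable def supNorm (μ : ∀ n, S n → ℝ) : ℝ :=
  sSup {v | ∃ (n : Fin N) (s : S n), v = |μ n s|}

/-- The finite-horizon LP value `V_τ^μ(x)`. -/
noncomputable def Vfin (P : ∀ n, Bool → S n → S n → ℝ) (r : ∀ n, S n → Bool → ℝ) (α : ℝ)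
    (μ : ∀ n, S n → ℝ) (τ : ℕ) (x : ∀ n, S n → ℝ) : ℝ :=
  sSup {v | ∃ y : ℕ → ∀ n, S n → Bool → ℝ,
    (∀ t, t ≤ τ → ∀ n, IsSA (y t n)) ∧
    (∀ n s, y 0 n s false + y 0 n s true = x n s) ∧
    (∀ t, t < τ → ∀ n s',
      y (t + 1) n s' false + y (t + 1) n s' true = nextVec (P n) (y t n) s') ∧
    (∀ t, t ≤ τ → BudgetFeasible α (y t)) ∧
    v = (∑ t ∈ Finset.range τ, lpReward r (y t)) +
      (1 / (N : ℝ)) * ∑ n, ∑ s, μ n s * (y τ n s false + y τ n s true)}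

/-- A stationary randomized policy respecting the budget constraint. -/
def IsPolicy (α : ℝ) (π : (∀ n, S n) → (Fin N → Bool) → ℝ) : Prop :=
  ∀ s : ∀ n, S n, (∀ a, 0 ≤ π s a) ∧ (∑ a : Fin N → Bool, π s a) = 1 ∧
    ∀ a : Fin N → Bool, π s a ≠ 0 → (∑ n, (if a n then (1 : ℝ) else 0)) ≤ α * N

/-- Distribution of the joint state at time `t` under policy `π` started from `s₀`. -/
noncomputable def stateDist (P : ∀ n, Bool → S n → S n → ℝ)
    (π : (∀ n, S n) → (Fin N → Bool) → ℝ) (s₀ : ∀ n, S n) : ℕ → (∀ n, S n) → ℝ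
  | 0, s => if s = s₀ then 1 else 0
  | t + 1, s' => ∑ s : ∀ n, S n, ∑ a : Fin N → Bool,
      stateDist P π s₀ t s * π s a * ∏ n, P n (a n) (s n) (s' n)

/-- The normalized stage reward `(1/N)∑ₙ rₙ(sₙ,aₙ)`. -/
noncomputable def stageReward (r : ∀ n, S n → Bool → ℝ) (s : ∀ n, S n) (a : Fin N → Bool) : ℝ :=
  (1 / (N : ℝ)) * ∑ n, r n (s n) (a n)

/-- Expected stage reward at time `t` under policy `π` started from `s₀`. -/
noncomputable def expStageReward (P : ∀ n, Bool → S n → S n → ℝ)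
    (r : ∀ n, S n → Bool → ℝ) (π : (∀ n, S n) → (Fin N → Bool) → ℝ)
    (s₀ : ∀ n, S n) (t : ℕ) : ℝ :=
  ∑ s : ∀ n, S n, stateDist P π s₀ t s * ∑ a : Fin N → Bool, π s a * stageReward r s a

/-- The Lagrangian `L_τ^μ(x,λ)` of the finite-horizon LP (budget constraints dualized). -/
noncomputable def Lag (P : ∀ n, Bool → S n → S n → ℝ) (r : ∀ n, S n → Bool → ℝ) (α : ℝ)
    (μ : ∀ n, S n → ℝ) (τ : ℕ) (x : ∀ n, S n → ℝ) (lam : ℕ → ℝ) : ℝ :=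
  sSup {v | ∃ y : ℕ → ∀ n, S n → Bool → ℝ,
    (∀ t, t ≤ τ → ∀ n, IsSA (y t n)) ∧
    (∀ n s, y 0 n s false + y 0 n s true = x n s) ∧
    (∀ t, t < τ → ∀ n s',
      y (t + 1) n s' false + y (t + 1) n s' true = nextVec (P n) (y t n) s') ∧
    v = (∑ t ∈ Finset.range τ,
        (lpReward r (y t) + lam t * (α - (1 / (N : ℝ)) * ∑ n, ∑ s, y t n s true))) +
      (1 / (N : ℝ)) * ∑ n, ∑ s, μ n s * (y τ n s false + y τ n s true)}

/-- The per-arm value `Vₙ^τ(x⁽ⁿ⁾,λ)`. -/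
noncomputable def Varm (P : ∀ n, Bool → S n → S n → ℝ) (r : ∀ n, S n → Bool → ℝ)
    (μ : ∀ n, S n → ℝ) (n : Fin N) (τ : ℕ) (xn : S n → ℝ) (lam : ℕ → ℝ) : ℝ :=
  sSup {v | ∃ z : ℕ → S n → Bool → ℝ,
    (∀ t, t ≤ τ → IsSA (z t)) ∧
    (∀ s, z 0 s false + z 0 s true = xn s) ∧
    (∀ t, t < τ → ∀ s', z (t + 1) s' false + z (t + 1) s' true = nextVec (P n) (z t) s') ∧
    v = (∑ t ∈ Finset.range τ,
        ((∑ s, (r n s false * z t s false + r n s true * z t s true)) -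
          lam t * ∑ s, z t s true)) +
      ∑ s, μ n s * (z τ s false + z τ s true)}

/-- One-hot encoding of a joint state as a tuple of probability vectors. -/
noncomputable def oneHot (s : ∀ n, S n) : ∀ n, S n → ℝ := fun n s' => if s' = s n then 1 else 0

end RMAB

/-!
The relaxed fixed-point LP maximizes a linear reward over the budget-feasible polyhedron
intersected with the kernel of the linear flow imbalance `y ↦ (y₀ + y₁) - (y₀ P⁰ + y₁ P¹)`.
The terminal vector is a Lagrange multiplier for the constraint "imbalance `= 0`". Because the
remaining constraints are polyhedral, the multiplier exists without any constraint qualification: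
it comes from Farkas' lemma applied on the kernel, followed by homogenization. The LP is feasible
because never activating an arm and drawing its state from a stationary distribution of the passive
chain costs no budget; compactness of the budget-feasible set then yields an optimal solution, at
which the imbalance, and hence the multiplier term, vanishes.
-/

section Farkas

open Module PointedCone

variable {𝕜 V W M : Type*} [Field 𝕜] [LinearOrder 𝕜] [IsStrictOrderedRing 𝕜]
  [AddCommGroup V] [Module 𝕜 V] [AddCommGroup W] [Module 𝕜 W] [AddCommGroup M] [Module 𝕜 M]

theorem pairing_nonneg_of_mem_hull_of_mem_dual {p : M →ₗ[𝕜] V →ₗ[𝕜] 𝕜} {s : Set M} {w : M} {x : V}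
    (hw : w ∈ hull 𝕜 s) (hx : x ∈ dual p s) : 0 ≤ p w x := by
  rw [← dual_hull] at hx
  exact hx hw

/-- Farkas' lemma. Stating it for a pairing `p` rather than for `Dual 𝕜 V` lets the induction keep
the set `s` and change only `p`. -/
theorem exists_mem_hull_pairing_eq_of_nonneg_on_dual {s : Set M} (hs : s.Finite)
    (p : M →ₗ[𝕜] V →ₗ[𝕜] 𝕜) (b : M) (hb : ∀ x ∈ dual p s, 0 ≤ p b x) :
    ∃ w ∈ hull 𝕜 s, p w = p b := by
  induction s, hs using Set.Finite.induction_on generalizing p with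
  | empty =>
    refine ⟨0, zero_mem _, LinearMap.ext fun x ↦ ?_⟩
    have hpos : 0 ≤ p b x := hb x (by simp)
    have hneg : 0 ≤ -p b x := by simpa using hb (-x) (by simp)
    simpa using le_antisymm hpos (neg_nonneg.1 hneg)
  | @insert a s _ _ ih =>
    by_cases hbs : ∀ x ∈ dual p s, 0 ≤ p b x
    · obtain ⟨w, hw, hwb⟩ := ih p hbs
      exact ⟨w, Submodule.span_mono (Set.subset_insert a s) hw, hwb⟩
    push Not at hbs
    obtain ⟨z, hz, hbz⟩ := hbs
    have haz : p a z < 0 := by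
      by_contra! haz
      exact hbz.not_ge (hb z (by simpa [dual_insert, haz] using hz))
    -- The projection along `z` onto the hyperplane `p a = 0`.
    let π : V →ₗ[𝕜] V := LinearMap.id - (p a).smulRight ((p a z)⁻¹ • z)
    have p_π (m : M) (x : V) : p m (π x) = p m x - p m z / p a z * p a x := by
      simp only [π, LinearMap.sub_apply, LinearMap.id_apply, LinearMap.smulRight_apply, map_sub,
        map_smul, smul_eq_mul]
      ring
    obtain ⟨w, hw, hwb⟩ := ih (p.compl₂ π) fun x hx ↦ hb (π x) (by
      simpa [dual_insert, p_π, haz.ne] using hx)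
    refine ⟨((p b z - p w z) / p a z) • a + w, ?_, LinearMap.ext fun x ↦ ?_⟩
    · have hwz : 0 ≤ p w z := pairing_nonneg_of_mem_hull_of_mem_dual hw hz
      have coeff_nonneg : 0 ≤ (p b z - p w z) / p a z :=
        div_nonneg_of_nonpos (by linarith) haz.le
      exact add_mem (smul_mem _ coeff_nonneg (subset_hull (Set.mem_insert a s)))
        (Submodule.span_mono (Set.subset_insert a s) hw)
    · have hwbx : p w (π x) = p b (π x) := LinearMap.congr_fun hwb x
      rw [p_π, p_π] at hwbx
      simp only [map_add, map_smul, LinearMap.add_apply, LinearMap.smul_apply, smul_eq_mul]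
      linear_combination hwbx

theorem exists_multiplier_of_nonneg_on_dual_inf_ker {s : Set (Dual 𝕜 V)} (hs : s.Finite)
    (Φ : V →ₗ[𝕜] W) (b : Dual 𝕜 V) (hb : ∀ x ∈ dual .id s, Φ x = 0 → 0 ≤ b x) :
    ∃ μ : Dual 𝕜 W, ∀ x ∈ dual .id s, 0 ≤ b x + μ (Φ x) := by
  obtain ⟨w, hw, hwb⟩ := exists_mem_hull_pairing_eq_of_nonneg_on_dual hs
    Φ.ker.subtype.dualMap b fun x hx ↦ hb x hx x.2
  have w_sub_b_mem_range : w - b ∈ Φ.dualMap.range := by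
    rw [Φ.range_dualMap_eq_dualAnnihilator_ker, Submodule.mem_dualAnnihilator]
    exact fun x hx ↦ sub_eq_zero.2 (LinearMap.congr_fun hwb ⟨x, hx⟩)
  obtain ⟨μ, hμ⟩ := w_sub_b_mem_range
  refine ⟨μ, fun x hx ↦ ?_⟩
  have hμx : μ (Φ x) = w x - b x := LinearMap.congr_fun hμ x
  have hwx : 0 ≤ w x := pairing_nonneg_of_mem_hull_of_mem_dual hw hx
  linarith

theorem nonpos_of_forall_apply_add_smul_le {f : Dual 𝕜 V} {x₀ x : V} {c : 𝕜}
    (hf : ∀ r : 𝕜, 0 ≤ r → f (x₀ + r • x) ≤ c) : f x ≤ 0 := by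
  simp only [map_add, map_smul, smul_eq_mul] at hf
  by_contra! hfx
  have hfx₀ : f x₀ ≤ c := by simpa using hf 0 le_rfl
  have h := hf ((c - f x₀) / f x + 1)
    (add_nonneg (div_nonneg (sub_nonneg.2 hfx₀) hfx.le) zero_le_one)
  rw [add_mul, div_mul_cancel₀ _ hfx.ne'] at h
  linarith

end Farkas

section Polyhedron

open Module PointedCone

variable {𝕜 V W : Type*} [Field 𝕜] [LinearOrder 𝕜]
  [AddCommGroup V] [Module 𝕜 V] [AddCommGroup W] [Module 𝕜 W]

variable (𝕜) in
/-- A polyhedron: the intersection of finitely many closed half-spaces, not necessarily bounded or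
nonempty. The half-space `f x ≤ c` is encoded by the pair `(f, c)`. -/
def IsPolyhedron (K : Set V) : Prop :=
  ∃ H : Set (Dual 𝕜 V × 𝕜), H.Finite ∧ K = {x | ∀ h ∈ H, h.1 x ≤ h.2}

namespace IsPolyhedron

theorem setOf_le (f : Dual 𝕜 V) (c : 𝕜) : IsPolyhedron 𝕜 {x | f x ≤ c} :=
  ⟨{(f, c)}, Set.finite_singleton _, by simp⟩

theorem inter {K L : Set V} (hK : IsPolyhedron 𝕜 K) (hL : IsPolyhedron 𝕜 L) :
    IsPolyhedron 𝕜 (K ∩ L) := by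
  obtain ⟨H, hH, rfl⟩ := hK
  obtain ⟨H', hH', rfl⟩ := hL
  refine ⟨H ∪ H', hH.union hH', ?_⟩
  ext x
  simp only [Set.mem_inter_iff, Set.mem_ofPred_eq, Set.mem_union, or_imp, forall_and]

theorem iInter {ι : Sort*} [Finite ι] {K : ι → Set V} (hK : ∀ i, IsPolyhedron 𝕜 (K i)) :
    IsPolyhedron 𝕜 (⋂ i, K i) := by
  choose H hH hK using hK
  refine ⟨⋃ i, H i, Set.finite_iUnion hH, ?_⟩
  ext x
  simp only [hK, Set.mem_iInter, Set.mem_ofPred_eq, Set.mem_iUnion, forall_exists_index]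
  exact forall_comm

theorem isClosed {E : Type*} [AddCommGroup E] [Module ℝ E] [TopologicalSpace E]
    [IsTopologicalAddGroup E] [ContinuousSMul ℝ E] [T2Space E] [FiniteDimensional ℝ E]
    {K : Set E} (hK : IsPolyhedron ℝ K) : IsClosed K := by
  obtain ⟨H, -, rfl⟩ := hK
  simp only [Set.ofPred_forall]
  exact isClosed_biInter fun h _ ↦
    isClosed_le h.1.continuous_of_finiteDimensional continuous_const

variable [IsStrictOrderedRing 𝕜]

theorem setOf_ge (f : Dual 𝕜 V) (c : 𝕜) : IsPolyhedron 𝕜 {x | c ≤ f x} := by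
  simpa using setOf_le (-f) (-c)

theorem setOf_eq (f : Dual 𝕜 V) (c : 𝕜) : IsPolyhedron 𝕜 {x | f x = c} := by
  simpa only [le_antisymm_iff, Set.ofPred_and] using (setOf_le f c).inter (setOf_ge f c)

/-- The bound on `K` extends to the cone over `K × {1}` together with its limit directions
(`t = 0`), along which `f` cannot grow. -/
theorem apply_le_mul_of_forall_apply_le {H : Set (Dual 𝕜 V × 𝕜)} {Φ : V →ₗ[𝕜] W} {f : Dual 𝕜 V}
    {c : 𝕜} (hne : ∃ x, (∀ h ∈ H, h.1 x ≤ h.2) ∧ Φ x = 0)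
    (hf : ∀ x, (∀ h ∈ H, h.1 x ≤ h.2) → Φ x = 0 → f x ≤ c)
    {x : V} {t : 𝕜} (ht : 0 ≤ t) (hx : ∀ h ∈ H, h.1 x ≤ h.2 * t) (hΦx : Φ x = 0) :
    f x ≤ c * t := by
  rcases ht.eq_or_lt with rfl | ht
  · obtain ⟨x₀, hx₀, hΦx₀⟩ := hne
    rw [mul_zero]
    refine nonpos_of_forall_apply_add_smul_le fun r hr ↦ hf (x₀ + r • x) (fun h hh ↦ ?_) ?_
    · have hhx : h.1 x ≤ 0 := by simpa using hx h hh
      simpa using add_le_add (hx₀ h hh) (mul_nonpos_of_nonneg_of_nonpos hr hhx)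
    · simp [hΦx₀, hΦx]
  · have h := hf (t⁻¹ • x)
      (fun h hh ↦ by simpa [inv_mul_le_iff₀ ht, mul_comm t] using hx h hh) (by simp [hΦx])
    simpa [inv_mul_le_iff₀ ht, mul_comm t] using h

theorem exists_multiplier {K : Set V} (hK : IsPolyhedron 𝕜 K) (Φ : V →ₗ[𝕜] W) (f : Dual 𝕜 V)
    (c : 𝕜) (hne : ∃ x ∈ K, Φ x = 0) (hf : ∀ x ∈ K, Φ x = 0 → f x ≤ c) :
    ∃ μ : Dual 𝕜 W, ∀ x ∈ K, f x ≤ c + μ (Φ x) := by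
  obtain ⟨H, hH, rfl⟩ := hK
  let s : Set (Dual 𝕜 (V × 𝕜)) := insert (LinearMap.snd 𝕜 V 𝕜)
    ((fun h ↦ h.2 • LinearMap.snd 𝕜 V 𝕜 - h.1 ∘ₗ LinearMap.fst 𝕜 V 𝕜) '' H)
  have mem_dual_s (x : V) (t : 𝕜) :
      (x, t) ∈ dual .id s ↔ 0 ≤ t ∧ ∀ h ∈ H, h.1 x ≤ h.2 * t := by
    simp only [mem_dual, s, Set.forall_mem_insert, Set.forall_mem_image]
    simp
  obtain ⟨μ, hμ⟩ := exists_multiplier_of_nonneg_on_dual_inf_ker ((hH.image _).insert _)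
    (Φ ∘ₗ LinearMap.fst 𝕜 V 𝕜) (c • LinearMap.snd 𝕜 V 𝕜 - f ∘ₗ LinearMap.fst 𝕜 V 𝕜) (by
      rintro ⟨x, t⟩ hxt hΦx
      obtain ⟨ht, hx⟩ := (mem_dual_s x t).1 hxt
      simpa using apply_le_mul_of_forall_apply_le hne hf ht hx hΦx)
  refine ⟨μ, fun x hx ↦ ?_⟩
  have hμx : 0 ≤ c - f x + μ (Φ x) := by
    simpa using hμ (x, 1) ((mem_dual_s x 1).2 ⟨zero_le_one, by simpa using hx⟩)
  linarith

end IsPolyhedron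

end Polyhedron

section Stationary

open Matrix

/-- `P` has a left eigenvector `v` of eigenvalue `1` because it has the right eigenvector `1`. Then
`|v| ≤ |v| P` entrywise, and equality holds since both sides have the same total mass. -/
theorem exists_stationary_of_mem_rowStochastic {𝕜 σ : Type*} [Field 𝕜] [LinearOrder 𝕜]
    [IsStrictOrderedRing 𝕜] [Fintype σ] [DecidableEq σ] [Nonempty σ] {P : Matrix σ σ 𝕜}
    (hP : P ∈ rowStochastic 𝕜 σ) : ∃ x ∈ stdSimplex 𝕜 σ, x ᵥ* P = x := by
  have mulVec_one_eq : P *ᵥ 1 = 1 := one_vecMul_of_mem_rowStochastic hP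
  have det_eq_zero : (1 - P).det = 0 :=
    exists_mulVec_eq_zero_iff.1 ⟨1, one_ne_zero, by simp [sub_mulVec, mulVec_one_eq]⟩
  obtain ⟨v, v_ne_zero, hv⟩ := exists_vecMul_eq_zero_iff.2 det_eq_zero
  rw [vecMul_sub, vecMul_one, sub_eq_zero] at hv
  have abs_le (j : σ) : |v| j ≤ (|v| ᵥ* P) j :=
    calc |v| j = |∑ i, v i * P i j| := by rw [Pi.abs_apply, congrFun hv j]; rfl
      _ ≤ ∑ i, |v i * P i j| := abs_sum_le_sum_abs _ _
      _ = (|v| ᵥ* P) j := by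
        simp [vecMul, dotProduct, abs_mul, abs_of_nonneg (nonneg_of_mem_rowStochastic hP)]
  have sum_eq : ∑ j, |v| j = ∑ j, (|v| ᵥ* P) j := by
    rw [← dotProduct_one, ← dotProduct_one, ← dotProduct_mulVec, mulVec_one_eq]
  have abs_stationary : |v| ᵥ* P = |v| := funext fun j ↦
    ((sum_eq_sum_iff_of_le fun j _ ↦ abs_le j).1 sum_eq j (mem_univ j)).symm
  have sum_pos : 0 < ∑ j, |v| j :=
    Fintype.sum_pos ((abs_nonneg v).lt_of_ne' (by simpa using v_ne_zero))
  refine ⟨(∑ j, |v| j)⁻¹ • |v|, ⟨fun j ↦ ?_, ?_⟩, by rw [smul_vecMul, abs_stationary]⟩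
  · exact mul_nonneg (inv_nonneg.2 sum_pos.le) (abs_nonneg (v j))
  · simp only [Pi.smul_apply, smul_eq_mul, ← mul_sum, inv_mul_cancel₀ sum_pos.ne']

theorem RowStochastic.exists_stationary {σ : Type} [Fintype σ] [Nonempty σ] {P : σ → σ → ℝ}
    (hP : RowStochastic P) : ∃ x, IsProbVec x ∧ ∀ s', ∑ s, x s * P s s' = x s' := by
  classical
  obtain ⟨x, hx, hxP⟩ := exists_stationary_of_mem_rowStochastic
    (P := Matrix.of P) (mem_rowStochastic_iff_sum.2 hP)
  exact ⟨x, hx, congrFun hxP⟩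

end Stationary

section FixedPointLP

open Module

variable {N : ℕ} {S : Fin N → Type} [∀ n, Fintype (S n)]

/-- The feasible set of the relaxed fixed-point LP without the flow-balance constraint. -/
def budgetFeasibleSet (S : Fin N → Type) [∀ n, Fintype (S n)] (α : ℝ) :
    Set (∀ n, S n → Bool → ℝ) :=
  {y | (∀ n, IsSA (y n)) ∧ BudgetFeasible α y}

/-- The normalized reward `lpReward r` as a linear functional. -/
noncomputable def rewardFunctional (r : ∀ n, S n → Bool → ℝ) :
    Dual ℝ (∀ n, S n → Bool → ℝ) where
  toFun := lpReward r
  map_add' y z := by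
    simp only [lpReward, ← mul_add, ← sum_add_distrib, Pi.add_apply]
    congr! 3
    ring
  map_smul' c y := by
    simp only [lpReward, Pi.smul_apply, smul_eq_mul, RingHom.id_apply, mul_sum]
    congr! 2
    ring

/-- The imbalance `(y₀ + y₁) - (y₀ P⁰ + y₁ P¹)` between current and next state distributions, with
the coordinates of all arms collected over `Σ n, S n`. -/
noncomputable def flowImbalance (P : ∀ n, Bool → S n → S n → ℝ) :
    (∀ n, S n → Bool → ℝ) →ₗ[ℝ] ((Σ n, S n) → ℝ) where
  toFun y i := (y i.1 i.2 false + y i.1 i.2 true) - nextVec (P i.1) (y i.1) i.2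
  map_add' y z := by
    ext i
    simp only [nextVec, Pi.add_apply, add_mul, sum_add_distrib]
    ring
  map_smul' c y := by
    ext i
    simp only [nextVec, Pi.smul_apply, smul_eq_mul, RingHom.id_apply, mul_assoc, ← mul_add,
      ← mul_sum]
    ring

theorem fpFeasible_iff {P : ∀ n, Bool → S n → S n → ℝ} {α : ℝ} {y : ∀ n, S n → Bool → ℝ} :
    FPFeasible P α y ↔ y ∈ budgetFeasibleSet S α ∧ flowImbalance P y = 0 := by
  simp [FPFeasible, budgetFeasibleSet, flowImbalance, funext_iff, Sigma.forall, sub_eq_zero,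
    and_assoc]

theorem isPolyhedron_budgetFeasibleSet (α : ℝ) : IsPolyhedron ℝ (budgetFeasibleSet S α) := by
  let coord (n : Fin N) (s : S n) (a : Bool) : Dual ℝ (∀ n, S n → Bool → ℝ) :=
    LinearMap.proj a ∘ₗ LinearMap.proj s ∘ₗ LinearMap.proj n
  have nonneg := IsPolyhedron.iInter fun n ↦ IsPolyhedron.iInter fun s ↦ IsPolyhedron.iInter
    fun a ↦ IsPolyhedron.setOf_ge (coord n s a) 0
  have mass := IsPolyhedron.iInter fun n ↦
    IsPolyhedron.setOf_eq (∑ s, (coord n s false + coord n s true)) 1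
  have budget := IsPolyhedron.setOf_le (∑ n, ∑ s, coord n s true) (N * α)
  convert (nonneg.inter mass).inter budget
  ext y
  simp [budgetFeasibleSet, IsSA, BudgetFeasible, forall_and, coord]

theorem IsSA.le_one {σ : Type} [Fintype σ] {y : σ → Bool → ℝ} (hy : IsSA y) (s : σ) (a : Bool) :
    y s a ≤ 1 :=
  calc y s a ≤ y s false + y s true := by
        cases a
        · exact le_add_of_nonneg_right (hy.1 s true)
        · exact le_add_of_nonneg_left (hy.1 s false)
    _ ≤ ∑ s, (y s false + y s true) :=
        single_le_sum (f := fun s ↦ y s false + y s true)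
          (fun s _ ↦ add_nonneg (hy.1 s false) (hy.1 s true)) (mem_univ s)
    _ = 1 := hy.2

theorem isCompact_budgetFeasibleSet (α : ℝ) : IsCompact (budgetFeasibleSet S α) :=
  isCompact_Icc.of_isClosed_subset (isPolyhedron_budgetFeasibleSet α).isClosed
    (fun _ hy ↦ ⟨fun n s a ↦ (hy.1 n).1 s a, fun n s a ↦ (hy.1 n).le_one s a⟩ :
      budgetFeasibleSet S α ⊆ Set.Icc 0 1)

theorem isCompact_setOf_fpFeasible (P : ∀ n, Bool → S n → S n → ℝ) (α : ℝ) :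
    IsCompact {y | FPFeasible P α y} := by
  simp only [fpFeasible_iff, Set.ofPred_and]
  exact (isCompact_budgetFeasibleSet α).inter_right
    (flowImbalance P).ker.closed_of_finiteDimensional

theorem isGreatest_gain {P : ∀ n, Bool → S n → S n → ℝ} {α : ℝ} (r : ∀ n, S n → Bool → ℝ)
    (hne : ∃ y, FPFeasible P α y) :
    IsGreatest {v | ∃ y : ∀ n, S n → Bool → ℝ, FPFeasible P α y ∧ v = lpReward r y}
      (gain P r α) := by
  obtain ⟨ystar, hystar, hmax⟩ := (isCompact_setOf_fpFeasible P α).exists_isMaxOn hne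
    (rewardFunctional r).continuous_of_finiteDimensional.continuousOn
  have isGreatest_ystar : IsGreatest {v | ∃ y, FPFeasible P α y ∧ v = lpReward r y}
      (lpReward r ystar) := by
    refine ⟨⟨ystar, hystar, rfl⟩, ?_⟩
    rintro _ ⟨y, hy, rfl⟩
    exact hmax hy
  have gain_eq : gain P r α = lpReward r ystar := isGreatest_ystar.csSup_eq
  exact gain_eq ▸ isGreatest_ystar

theorem exists_dissipative (hN : 1 ≤ N) {P : ∀ n, Bool → S n → S n → ℝ} {α : ℝ}
    (r : ∀ n, S n → Bool → ℝ) (hne : ∃ y, FPFeasible P α y) : ∃ μ, Dissipative P r α μ := by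
  classical
  obtain ⟨μ, hμ⟩ := (isPolyhedron_budgetFeasibleSet α).exists_multiplier (flowImbalance P)
    (rewardFunctional r) (gain P r α) (hne.imp fun _ ↦ fpFeasible_iff.1)
    fun y hy hPy ↦ (isGreatest_gain r hne).2 ⟨y, fpFeasible_iff.2 ⟨hy, hPy⟩, rfl⟩
  let μcoord (n : Fin N) (s : S n) : ℝ := μ fun i ↦ if ⟨n, s⟩ = i then 1 else 0
  refine ⟨fun n s ↦ N * μcoord n s, fun y hy hbudget ↦ ?_⟩
  have hN₀ : (N : ℝ) ≠ 0 := Nat.cast_ne_zero.2 (Nat.one_le_iff_ne_zero.1 hN)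
  have μ_flowImbalance : μ (flowImbalance P y) = (1 / (N : ℝ)) * ∑ n, ∑ s,
      N * μcoord n s * ((y n s false + y n s true) - nextVec (P n) (y n) s) := by
    rw [LinearMap.pi_apply_eq_sum_univ, Fintype.sum_sigma]
    simp only [mul_assoc, ← mul_sum, one_div, inv_mul_cancel_left₀ hN₀]
    congr! 2
    exact mul_comm _ _
  rw [← μ_flowImbalance, sub_le_iff_le_add']
  exact hμ y ⟨hy, hbudget⟩

theorem exists_fpFeasible [∀ n, Nonempty (S n)] {P : ∀ n, Bool → S n → S n → ℝ} {α : ℝ}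
    (hα : 0 ≤ α) (hP : ∀ n, RowStochastic (P n false)) : ∃ y, FPFeasible P α y := by
  choose x hx hxP using fun n ↦ (hP n).exists_stationary
  refine ⟨fun n s a ↦ if a then 0 else x n s, fun n ↦ ⟨fun s a ↦ ?_, ?_⟩, ?_, fun n s' ↦ ?_⟩
  · cases a <;> simp [(hx n).1 s]
  · simpa using (hx n).2
  · simpa [BudgetFeasible] using mul_nonneg N.cast_nonneg hα
  · simpa [nextVec] using (hxP n s').symm

theorem dissipativity_of_fixed_point_general (hN : 1 ≤ N) {P : ∀ n, Bool → S n → S n → ℝ} {α : ℝ}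
    (r : ∀ n, S n → Bool → ℝ) (hne : ∃ y, FPFeasible P α y) :
    ∃ μ : ∀ n, S n → ℝ,
      (∀ y : ∀ n, S n → Bool → ℝ, (∀ n, IsSA (y n)) → BudgetFeasible α y →
        0 ≤ gain P r α - lpReward r y +
          (1 / (N : ℝ)) * ∑ n, ∑ s, μ n s *
            ((y n s false + y n s true) - nextVec (P n) (y n) s)) ∧
      ∃ ystar : ∀ n, S n → Bool → ℝ, FPFeasible P α ystar ∧
        lpReward r ystar = gain P r α ∧
        gain P r α - lpReward r ystar +
          (1 / (N : ℝ)) * ∑ n, ∑ s, μ n s *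
            ((ystar n s false + ystar n s true) - nextVec (P n) (ystar n) s) = 0 := by
  obtain ⟨μ, hμ⟩ := exists_dissipative hN r hne
  obtain ⟨ystar, hystar, gain_eq⟩ := (isGreatest_gain r hne).1
  refine ⟨μ, fun y hy hbudget ↦ by linarith [hμ y hy hbudget], ystar, hystar, gain_eq.symm, ?_⟩
  have balanced (n : Fin N) (s : S n) :
      (ystar n s false + ystar n s true) - nextVec (P n) (ystar n) s = 0 :=
    sub_eq_zero.2 (hystar.2.2 n s)
  simp [gain_eq, balanced]

end FixedPointLP

/-- existence of a terminal vector making the rotated cost nonnegative on the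
budget-feasible set, with equality at an optimal solution of the relaxed fixed-point LP. -/
theorem dissipativity_of_fixed_point
    {N : ℕ} {S : Fin N → Type} [∀ n, Fintype (S n)] [∀ n, DecidableEq (S n)]
    [∀ n, Nonempty (S n)]
    (hN : 1 ≤ N) (α : ℝ) (hα0 : 0 < α) (hα1 : α ≤ 1)
    (P : ∀ n, Bool → S n → S n → ℝ) (hP : ∀ n a, RowStochastic (P n a))
    (r : ∀ n, S n → Bool → ℝ) (hr : ∀ n s a, 0 ≤ r n s a ∧ r n s a ≤ 1) :
    ∃ μ : ∀ n, S n → ℝ,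
      (∀ y : ∀ n, S n → Bool → ℝ, (∀ n, IsSA (y n)) → BudgetFeasible α y →
        0 ≤ gain P r α - lpReward r y +
          (1 / (N : ℝ)) * ∑ n, ∑ s, μ n s *
            ((y n s false + y n s true) - nextVec (P n) (y n) s)) ∧
      ∃ ystar : ∀ n, S n → Bool → ℝ, FPFeasible P α ystar ∧
        lpReward r ystar = gain P r α ∧
        gain P r α - lpReward r ystar +
          (1 / (N : ℝ)) * ∑ n, ∑ s, μ n s *
            ((ystar n s false + ystar n s true) - nextVec (P n) (ystar n) s) = 0 :=
  dissipativity_of_fixed_point_general hN r (exists_fpFeasible hα0.le fun n ↦ hP n false)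
end

section
/- Fix a terminal vector μ, a horizon τ ≥ 1, and an initial condition x. Then: (i) for every λ ∈ [0,∞)^τ the Lagrangian decomposes as L_τ^μ(x,λ) = α·∑_{t=0}^{τ−1} λ_t + (1/N)·∑_{n=1}^N V_n^τ(x^{(n)},λ), where V_n^τ(x^{(n)},λ) is the per-arm value defined below; (ii) weak duality holds: V_τ^μ(x) ≤ L_τ^μ(x,λ) for every λ ∈ [0,∞)^τ; (iii) the map λ ↦ L_τ^μ(x,λ) is convex on [0,∞)^τ; and (iv) strong duality holds: there exists λ* ∈ [0,∞)^τ with L_τ^μ(x,λ*) = V_τ^μ(x). -/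
open Finset Filter

/-!
Summing the Lagrangian arm by arm shows that the only coupling between the arms is the constant
`α ∑ λ_t`, so its supremum over a product of single-arm trajectory sets is the sum of the single-arm
suprema. As a supremum of functions affine in `λ`, it is convex. The never-activating trajectory has
slack `α > 0` in every budget constraint, so Slater's condition holds, and separating the hypograph
of (slacks, objective) from an open orthant produces the optimal multipliers. The budget constraint
at time `τ` has no multiplier, but the terminal reward does not see the terminal action, so that
constraint may be dropped.
-/

section ConcaveProgram

variable {ι E : Type*}

/-- The Lagrangian of the program "maximize `f` subject to `0 ≤ g i` for `i ∈ I`". Multipliers are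
indexed by all of `ι`, those outside `I` being irrelevant. -/
def lagrangian (f : E → ℝ) (g : ι → E → ℝ) (I : Finset ι) (l : ι → ℝ) (y : E) : ℝ :=
  f y + ∑ i ∈ I, l i * g i y

/-- The feasible points of `K` for the constraints `0 ≤ g i`, `i ∈ I`. -/
def feasibleSet (K : Set E) (g : ι → E → ℝ) (I : Finset ι) : Set E :=
  {y ∈ K | ∀ i ∈ I, 0 ≤ g i y}

/-- The value of the program "maximize `f` over `K` subject to `0 ≤ g i` for `i ∈ I`". It is
meaningful only for a feasible program with bounded objective, `sSup` being `0` otherwise. -/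
noncomputable def primalValue (K : Set E) (f : E → ℝ) (g : ι → E → ℝ) (I : Finset ι) : ℝ :=
  sSup (f '' feasibleSet K g I)

/-- The Lagrangian dual function, the supremum of the Lagrangian over `K`. It is meaningful only at
multipliers for which the Lagrangian is bounded above on `K`, `sSup` being `0` otherwise. -/
noncomputable def dualFunction (K : Set E) (f : E → ℝ) (g : ι → E → ℝ) (I : Finset ι)
    (l : ι → ℝ) : ℝ :=
  sSup (lagrangian f g I l '' K)

variable {K : Set E} {f : E → ℝ} {g : ι → E → ℝ} {I : Finset ι} {l : ι → ℝ}

lemma lagrangian_zero : lagrangian f g I 0 = f := by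
  funext y
  simp [lagrangian]

lemma le_lagrangian_of_mem_feasibleSet (hl : ∀ i ∈ I, 0 ≤ l i) {y : E}
    (hy : y ∈ feasibleSet K g I) : f y ≤ lagrangian f g I l y :=
  le_add_of_nonneg_right <| sum_nonneg fun i hi => mul_nonneg (hl i hi) (hy.2 i hi)

theorem primalValue_le_dualFunction (hne : (feasibleSet K g I).Nonempty)
    (hbdd : BddAbove (lagrangian f g I l '' K)) (hl : ∀ i ∈ I, 0 ≤ l i) :
    primalValue K f g I ≤ dualFunction K f g I l := by
  refine csSup_le (hne.image f) ?_
  rintro _ ⟨y, hy, rfl⟩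
  exact (le_lagrangian_of_mem_feasibleSet hl hy).trans
    (le_csSup hbdd (Set.mem_image_of_mem _ hy.1))

lemma lagrangian_add_smul {a b : ℝ} (hab : a + b = 1) (l l' : ι → ℝ) (y : E) :
    lagrangian f g I (a • l + b • l') y = a * lagrangian f g I l y + b * lagrangian f g I l' y := by
  simp only [lagrangian, Pi.add_apply, Pi.smul_apply, smul_eq_mul, add_mul, mul_assoc,
    sum_add_distrib, ← mul_sum]
  linear_combination -(f y) * hab

theorem convexOn_dualFunction (hne : K.Nonempty)
    (hbdd : ∀ l, BddAbove (lagrangian f g I l '' K)) :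
    ConvexOn ℝ Set.univ (dualFunction K f g I) := by
  refine ⟨convex_univ, fun l _ l' _ a b ha hb hab => csSup_le (hne.image _) ?_⟩
  rintro _ ⟨y, hy, rfl⟩
  have lagrangian_le (l) : lagrangian f g I l y ≤ dualFunction K f g I l :=
    le_csSup (hbdd l) (Set.mem_image_of_mem _ hy)
  rw [lagrangian_add_smul hab]
  exact add_le_add (mul_le_mul_of_nonneg_left (lagrangian_le l) ha)
    (mul_le_mul_of_nonneg_left (lagrangian_le l') hb)

lemma nonpos_of_forall_mul_le {c u : ℝ} (h : ∀ t : ℝ, 0 ≤ t → t * c ≤ u) : c ≤ 0 := by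
  by_contra! hc
  have hu : |u| + 1 ≤ u := by
    simpa [div_mul_cancel₀ _ hc.ne'] using h ((|u| + 1) / c) (by positivity)
  linarith [le_abs_self u]

lemma apply_le_of_nonneg_of_forall_pos_lt {φ : StrongDual ℝ (ι → ℝ)} {u : ℝ}
    (hφ : ∀ v : ι → ℝ, (∀ i, 0 < v i) → φ v < u) {v : ι → ℝ} (hv : ∀ i, 0 ≤ v i) : φ v ≤ u := by
  have hv_closure : v ∈ closure (Set.univ.pi fun _ : ι => Set.Ioi (0 : ℝ)) := by
    rw [closure_pi_set]
    exact fun i _ => by simpa using hv i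
  refine le_on_closure ?_ φ.continuous.continuousOn continuousOn_const hv_closure
  exact fun w hw => (hφ w fun i => hw i trivial).le

lemma exists_nonneg_eq_neg_sum_of_forall_nonneg_le [Fintype ι] {φ : (ι → ℝ) →ₗ[ℝ] ℝ} {u : ℝ}
    (hφ : ∀ v : ι → ℝ, (∀ i, 0 ≤ v i) → φ v ≤ u) :
    ∃ w : ι → ℝ, (∀ i, 0 ≤ w i) ∧ ∀ v, φ v = -∑ i, w i * v i := by
  classical
  refine ⟨fun i => -φ (Pi.single i 1), fun i => ?_, fun v => ?_⟩
  · refine neg_nonneg.2 <| nonpos_of_forall_mul_le (u := u) fun t ht => ?_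
    have hsingle : (0 : ι → ℝ) ≤ Pi.single i 1 := Pi.single_nonneg.2 zero_le_one
    rw [← smul_eq_mul, ← map_smul]
    exact hφ _ fun j => mul_nonneg ht (hsingle j)
  · conv_lhs => rw [← univ_sum_single v, map_sum]
    rw [← sum_neg_distrib]
    refine sum_congr rfl fun i _ => ?_
    rw [neg_mul, neg_neg, mul_comm, ← smul_eq_mul, ← map_smul, ← Pi.single_smul, smul_eq_mul,
      mul_one]

variable [AddCommGroup E] [Module ℝ E]

lemma convex_setOf_exists_le (hK : Convex ℝ K) (hg : ∀ i, ConcaveOn ℝ K (g i)) :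
    Convex ℝ {v : ι → ℝ | ∃ y ∈ K, ∀ i, v i ≤ g i y} := by
  rintro v ⟨y, hy, hv⟩ w ⟨z, hz, hw⟩ a b ha hb hab
  refine ⟨a • y + b • z, hK hy hz ha hb hab, fun i => le_trans ?_ ((hg i).2 hy hz ha hb hab)⟩
  exact add_le_add (mul_le_mul_of_nonneg_left (hv i) ha) (mul_le_mul_of_nonneg_left (hw i) hb)

/-- The theorem of the alternative of Fan, Glicksberg and Hoffman. -/
theorem exists_nonneg_ne_zero_sum_mul_nonpos [Fintype ι] (hne : K.Nonempty)
    (hg : ∀ i, ConcaveOn ℝ K (g i)) (hnot : ∀ y ∈ K, ∃ i, g i y ≤ 0) :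
    ∃ w : ι → ℝ, (∀ i, 0 ≤ w i) ∧ w ≠ 0 ∧ ∀ y ∈ K, ∑ i, w i * g i y ≤ 0 := by
  obtain ⟨y₀, hy₀⟩ := hne
  obtain ⟨i₀, -⟩ := hnot y₀ hy₀
  have hdisj : Disjoint (Set.univ.pi fun _ : ι => Set.Ioi (0 : ℝ))
      {v : ι → ℝ | ∃ y ∈ K, ∀ i, v i ≤ g i y} := by
    refine Set.disjoint_left.2 fun v hv ⟨y, hy, hvy⟩ => ?_
    obtain ⟨i, hi⟩ := hnot y hy
    exact (hv i trivial).not_ge ((hvy i).trans hi)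
  obtain ⟨φ, u, hφlt, hφge⟩ := geometric_hahn_banach_open
    (convex_pi fun _ _ => convex_Ioi (0 : ℝ)) (isOpen_set_pi Set.finite_univ fun _ _ => isOpen_Ioi)
    (convex_setOf_exists_le (hg i₀).1 hg) hdisj
  have hφle (v : ι → ℝ) (hv : ∀ i, 0 ≤ v i) : φ v ≤ u :=
    apply_le_of_nonneg_of_forall_pos_lt (fun v hv => hφlt v fun i _ => hv i) hv
  have hu : 0 ≤ u := by simpa using hφle 0 fun _ => le_rfl
  obtain ⟨w, hw, hφ⟩ :=
    exists_nonneg_eq_neg_sum_of_forall_nonneg_le (φ := (φ : (ι → ℝ) →ₗ[ℝ] ℝ)) hφle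
  simp only [ContinuousLinearMap.coe_coe] at hφ
  have le_neg_sum (y) (hy : y ∈ K) : u ≤ -∑ i, w i * g i y := by
    rw [← hφ fun i => g i y]
    exact hφge _ ⟨y, hy, fun _ => le_rfl⟩
  refine ⟨w, hw, ?_, fun y hy => neg_nonneg.1 (hu.trans (le_neg_sum y hy))⟩
  rintro rfl
  have hu_pos : 0 < u := by
    simpa [hφ] using hφlt (fun _ => 1) fun _ _ => Set.mem_Ioi.2 one_pos
  exact hu_pos.not_ge (by simpa using le_neg_sum y₀ hy₀)

theorem exists_fritzJohn_multipliers {V : ℝ} (hne : K.Nonempty) (hf : ConcaveOn ℝ K f)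
    (hg : ∀ i ∈ I, ConcaveOn ℝ K (g i)) (hV : ∀ y ∈ feasibleSet K g I, f y ≤ V) :
    ∃ (w₀ : ℝ) (w : ι → ℝ), 0 ≤ w₀ ∧ (∀ i, 0 ≤ w i) ∧ (w₀ ≠ 0 ∨ ∃ i ∈ I, w i ≠ 0) ∧
      ∀ y ∈ K, w₀ * (f y - V) + ∑ i ∈ I, w i * g i y ≤ 0 := by
  classical
  let G : Option I → E → ℝ := fun o => o.elim (fun y => f y - V) fun i => g i
  have hG : ∀ o, ConcaveOn ℝ K (G o)
    | none => hf.sub (convexOn_const V hf.1)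
    | some i => hg i i.2
  have hnot : ∀ y ∈ K, ∃ o, G o y ≤ 0 := by
    intro y hy
    by_contra! h
    exact (sub_pos.1 (h none)).not_ge (hV y ⟨hy, fun i hi => (h (some ⟨i, hi⟩)).le⟩)
  obtain ⟨w, hw, hw_ne, hsum⟩ := exists_nonneg_ne_zero_sum_mul_nonpos hne hG hnot
  refine ⟨w none, fun i => if hi : i ∈ I then w (some ⟨i, hi⟩) else 0, hw none, fun i => ?_, ?_,
    fun y hy => ?_⟩
  · by_cases hi : i ∈ I <;> simp [hi, hw]
  · obtain ⟨_ | i, ho⟩ := Function.ne_iff.1 hw_ne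
    exacts [Or.inl ho, Or.inr ⟨i, i.2, by simpa using ho⟩]
  · rw [← sum_coe_sort I]
    simpa [Fintype.sum_option, G] using hsum y hy

theorem exists_nonneg_lagrangian_le_of_slater {V : ℝ} (hf : ConcaveOn ℝ K f)
    (hg : ∀ i ∈ I, ConcaveOn ℝ K (g i)) (slater : ∃ y ∈ K, ∀ i ∈ I, 0 < g i y)
    (hV : ∀ y ∈ feasibleSet K g I, f y ≤ V) :
    ∃ l : ι → ℝ, (∀ i, 0 ≤ l i) ∧ ∀ y ∈ K, lagrangian f g I l y ≤ V := by
  obtain ⟨y₀, hy₀, hpos⟩ := slater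
  obtain ⟨w₀, w, hw₀, hw, hne, hsum⟩ := exists_fritzJohn_multipliers ⟨y₀, hy₀⟩ hf hg hV
  have hw₀_pos : 0 < w₀ := by
    refine hw₀.lt_of_ne' fun h₀ => ?_
    obtain ⟨i, hi, hwi⟩ := hne.resolve_left (not_not.2 h₀)
    have hsum_pos : 0 < ∑ i ∈ I, w i * g i y₀ :=
      sum_pos' (fun j hj => mul_nonneg (hw j) (hpos j hj).le)
        ⟨i, hi, mul_pos ((hw i).lt_of_ne' hwi) (hpos i hi)⟩
    exact hsum_pos.not_ge (by simpa [h₀] using hsum y₀ hy₀)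
  refine ⟨fun i => w i / w₀, fun i => div_nonneg (hw i) hw₀, fun y hy => ?_⟩
  have hscale : w₀ * ∑ i ∈ I, w i / w₀ * g i y = ∑ i ∈ I, w i * g i y := by
    rw [mul_sum]
    exact sum_congr rfl fun i _ => by field_simp
  refine le_of_mul_le_mul_left ?_ hw₀_pos
  rw [lagrangian, mul_add, hscale]
  linarith [hsum y hy]

theorem exists_dualFunction_eq_primalValue_of_slater (hf : ConcaveOn ℝ K f)
    (hg : ∀ i ∈ I, ConcaveOn ℝ K (g i)) (slater : ∃ y ∈ K, ∀ i ∈ I, 0 < g i y)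
    (hbdd : BddAbove (f '' feasibleSet K g I)) :
    ∃ l : ι → ℝ, (∀ i, 0 ≤ l i) ∧ dualFunction K f g I l = primalValue K f g I := by
  obtain ⟨l, hl, hle⟩ := exists_nonneg_lagrangian_le_of_slater hf hg slater
    fun y hy => le_csSup hbdd (Set.mem_image_of_mem f hy)
  obtain ⟨y₀, hy₀, hpos⟩ := slater
  have hub : primalValue K f g I ∈ upperBounds (lagrangian f g I l '' K) := by
    rintro _ ⟨y, hy, rfl⟩
    exact hle y hy
  exact ⟨l, hl, le_antisymm (csSup_le (Set.Nonempty.image _ ⟨y₀, hy₀⟩) hub)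
    (primalValue_le_dualFunction ⟨y₀, hy₀, fun i hi => (hpos i hi).le⟩ ⟨_, hub⟩ fun i _ => hl i)⟩

end ConcaveProgram

section Supremum

open scoped Pointwise

variable {ι G : Type*} [AddCommGroup G] [Preorder G] [AddLeftMono G]

lemma isLUB_sum {I : Finset ι} {A : ι → Set G} {a : ι → G} (h : ∀ i ∈ I, IsLUB (A i) (a i)) :
    IsLUB (∑ i ∈ I, A i) (∑ i ∈ I, a i) := by
  classical
  induction I using Finset.induction_on with
  | empty => exact isLUB_singleton
  | insert i I hi ih =>
    rw [sum_insert hi, sum_insert hi]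
    exact (h i (mem_insert_self i I)).add (ih fun j hj => h j (mem_insert_of_mem hj))

lemma isLUB_image_pi_sum [Fintype ι] {Z : ι → Type*} {K : ∀ i, Set (Z i)} {h : ∀ i, Z i → G}
    {a : ι → G} (ha : ∀ i, IsLUB (h i '' K i) (a i)) :
    IsLUB ((fun z => ∑ i, h i (z i)) '' Set.univ.pi K) (∑ i, a i) := by
  convert isLUB_sum fun i (_ : i ∈ univ) => ha i using 1
  ext v
  rw [Set.mem_fintype_sum]
  constructor
  · rintro ⟨z, hz, rfl⟩
    exact ⟨_, fun i => Set.mem_image_of_mem (h i) (hz i trivial), rfl⟩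
  · rintro ⟨v, hv, rfl⟩
    choose z hz hzv using hv
    exact ⟨z, fun i _ => hz i, sum_congr rfl fun i _ => hzv i⟩

end Supremum

section Arm

variable {σ : Type}

/-- The state distribution `y₀ + y₁` of a state-action vector `y`. -/
def stateMarginal (y : σ → Bool → ℝ) (s : σ) : ℝ := y s false + y s true

/-- The state-action vector with state distribution `x` that is never active. -/
def passiveVec (x : σ → ℝ) (s : σ) (a : Bool) : ℝ := if a then 0 else x s

lemma stateMarginal_passiveVec (x : σ → ℝ) : stateMarginal (passiveVec x) = x := by
  funext s
  simp [stateMarginal, passiveVec]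

lemma stateMarginal_add_smul (a b : ℝ) (y w : σ → Bool → ℝ) :
    stateMarginal (a • y + b • w) = a • stateMarginal y + b • stateMarginal w := by
  funext s
  simp only [stateMarginal, Pi.add_apply, Pi.smul_apply, smul_eq_mul]
  ring

variable [Fintype σ]

/-- The trajectories of a single arm over the horizon `τ` that start from `x` and follow the
transition kernel `P`. Entries at times after `τ` are unconstrained. -/
def armTrajectories (P : Bool → σ → σ → ℝ) (τ : ℕ) (x : σ → ℝ) : Set (ℕ → σ → Bool → ℝ) :=
  {z | (∀ t ≤ τ, IsSA (z t)) ∧ stateMarginal (z 0) = x ∧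
    ∀ t < τ, stateMarginal (z (t + 1)) = nextVec P (z t)}

/-- The objective of a single arm that pays `lam t` for being active at time `t`. -/
noncomputable def armObjective (r : σ → Bool → ℝ) (μ : σ → ℝ) (τ : ℕ) (lam : ℕ → ℝ)
    (z : ℕ → σ → Bool → ℝ) : ℝ :=
  (∑ t ∈ range τ, ((∑ s, (r s false * z t s false + r s true * z t s true)) -
      lam t * ∑ s, z t s true)) +
    ∑ s, μ s * stateMarginal (z τ) s

/-- The trajectory of a single arm started from `x` and never activated. -/
noncomputable def passiveTrajectory (P : Bool → σ → σ → ℝ) (x : σ → ℝ) : ℕ → σ → Bool → ℝ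
  | 0 => passiveVec x
  | t + 1 => passiveVec (nextVec P (passiveTrajectory P x t))

variable {P : Bool → σ → σ → ℝ} {τ : ℕ} {x : σ → ℝ} {y : σ → Bool → ℝ}

lemma isSA_passiveVec (hx : IsProbVec x) : IsSA (passiveVec x) := by
  refine ⟨fun s a => ?_, by simpa [passiveVec] using hx.2⟩
  cases a
  exacts [hx.1 s, le_rfl]

lemma isProbVec_nextVec (hP : ∀ a, RowStochastic (P a)) (hy : IsSA y) :
    IsProbVec (nextVec P y) := by
  refine ⟨fun s' => sum_nonneg fun s _ => add_nonneg
    (mul_nonneg (hy.1 s _) ((hP _).1 s s')) (mul_nonneg (hy.1 s _) ((hP _).1 s s')), ?_⟩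
  calc ∑ s', nextVec P y s'
      = ∑ s, ∑ s', (y s false * P false s s' + y s true * P true s s') := sum_comm
    _ = ∑ s, (y s false + y s true) := by
        simp only [sum_add_distrib, ← mul_sum, (hP _).2, mul_one]
    _ = 1 := hy.2

lemma passiveTrajectory_apply_true (t : ℕ) (s : σ) : passiveTrajectory P x t s true = 0 := by
  cases t <;> rfl

lemma isSA_passiveTrajectory (hP : ∀ a, RowStochastic (P a)) (hx : IsProbVec x) (t : ℕ) :
    IsSA (passiveTrajectory P x t) := by
  induction t with
  | zero => exact isSA_passiveVec hx
  | succ t ih => exact isSA_passiveVec (isProbVec_nextVec hP ih)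

lemma passiveTrajectory_mem_armTrajectories (hP : ∀ a, RowStochastic (P a)) (hx : IsProbVec x)
    (τ : ℕ) : passiveTrajectory P x ∈ armTrajectories P τ x :=
  ⟨fun t _ => isSA_passiveTrajectory hP hx t, stateMarginal_passiveVec x,
    fun _ _ => stateMarginal_passiveVec _⟩

lemma IsSA.isProbVec_stateMarginal (hy : IsSA y) : IsProbVec (stateMarginal y) :=
  ⟨fun s => add_nonneg (hy.1 s _) (hy.1 s _), hy.2⟩

lemma update_passiveVec_mem_armTrajectories {z : ℕ → σ → Bool → ℝ}
    (hz : z ∈ armTrajectories P τ x) :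
    Function.update z τ (passiveVec (stateMarginal (z τ))) ∈ armTrajectories P τ x := by
  obtain ⟨hSA, hinit, hflow⟩ := hz
  have stateMarginal_update (t : ℕ) : stateMarginal
      (Function.update z τ (passiveVec (stateMarginal (z τ))) t) = stateMarginal (z t) := by
    rcases eq_or_ne t τ with rfl | ht
    · rw [Function.update_self, stateMarginal_passiveVec]
    · rw [Function.update_of_ne ht]
  refine ⟨fun t ht => ?_, (stateMarginal_update 0).trans hinit, fun t ht => ?_⟩
  · rcases eq_or_ne t τ with rfl | ht'
    · rw [Function.update_self]
      exact isSA_passiveVec (hSA t le_rfl).isProbVec_stateMarginal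
    · rw [Function.update_of_ne ht']
      exact hSA t ht
  · rw [stateMarginal_update, Function.update_of_ne ht.ne]
    exact hflow t ht

lemma nextVec_add_smul (a b : ℝ) (y w : σ → Bool → ℝ) :
    nextVec P (a • y + b • w) = a • nextVec P y + b • nextVec P w := by
  funext s'
  simp only [nextVec, Pi.add_apply, Pi.smul_apply, smul_eq_mul, mul_sum, ← sum_add_distrib]
  exact sum_congr rfl fun s _ => by ring

lemma convex_setOf_isSA : Convex ℝ {y : σ → Bool → ℝ | IsSA y} := by
  intro y hy w hw a b ha hb hab
  refine ⟨fun s c => add_nonneg (mul_nonneg ha (hy.1 s c)) (mul_nonneg hb (hw.1 s c)), ?_⟩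
  calc ∑ s, stateMarginal (a • y + b • w) s
      = a * ∑ s, stateMarginal y s + b * ∑ s, stateMarginal w s := by
        simp only [stateMarginal_add_smul, Pi.add_apply, Pi.smul_apply, smul_eq_mul,
          sum_add_distrib, mul_sum]
    _ = 1 := by
        rw [hy.isProbVec_stateMarginal.2, hw.isProbVec_stateMarginal.2, mul_one, mul_one, hab]

lemma convex_armTrajectories (P : Bool → σ → σ → ℝ) (τ : ℕ) (x : σ → ℝ) :
    Convex ℝ (armTrajectories P τ x) := by
  rintro z ⟨hzSA, hzinit, hzflow⟩ w ⟨hwSA, hwinit, hwflow⟩ a b ha hb hab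
  refine ⟨fun t ht => convex_setOf_isSA (hzSA t ht) (hwSA t ht) ha hb hab, ?_, fun t ht => ?_⟩
  · change stateMarginal (a • z 0 + b • w 0) = x
    rw [stateMarginal_add_smul, hzinit, hwinit, ← add_smul, hab, one_smul]
  · change stateMarginal (a • z (t + 1) + b • w (t + 1)) = nextVec P (a • z t + b • w t)
    rw [stateMarginal_add_smul, nextVec_add_smul, hzflow t ht, hwflow t ht]

lemma IsProbVec.apply_mem_Icc (hx : IsProbVec x) (s : σ) : x s ∈ Set.Icc (0 : ℝ) 1 :=
  ⟨hx.1 s, hx.2 ▸ single_le_sum (fun s _ => hx.1 s) (mem_univ s)⟩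

lemma IsSA.apply_mem_Icc (hy : IsSA y) (s : σ) (a : Bool) : y s a ∈ Set.Icc (0 : ℝ) 1 := by
  refine ⟨hy.1 s a, le_trans ?_ (hy.isProbVec_stateMarginal.apply_mem_Icc s).2⟩
  cases a
  exacts [le_add_of_nonneg_right (hy.1 s true), le_add_of_nonneg_left (hy.1 s false)]

lemma IsSA.sum_true_mem_Icc (hy : IsSA y) : ∑ s, y s true ∈ Set.Icc (0 : ℝ) 1 :=
  ⟨sum_nonneg fun s _ => hy.1 s true,
    hy.2 ▸ sum_le_sum fun s _ => le_add_of_nonneg_left (hy.1 s false)⟩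

lemma mul_le_abs_of_mem_Icc {c p : ℝ} (hp : p ∈ Set.Icc (0 : ℝ) 1) : c * p ≤ |c| :=
  (mul_le_mul_of_nonneg_right (le_abs_self c) hp.1).trans
    (mul_le_of_le_one_right (abs_nonneg c) hp.2)

lemma bddAbove_armObjective_image (P : Bool → σ → σ → ℝ) (r : σ → Bool → ℝ) (μ : σ → ℝ) (τ : ℕ)
    (x : σ → ℝ) (lam : ℕ → ℝ) : BddAbove (armObjective r μ τ lam '' armTrajectories P τ x) := by
  refine ⟨(∑ t ∈ range τ, ((∑ s, (|r s false| + |r s true|)) + |lam t|)) + ∑ s, |μ s|, ?_⟩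
  rintro _ ⟨z, ⟨hSA, -, -⟩, rfl⟩
  refine add_le_add (sum_le_sum fun t ht => ?_) (sum_le_sum fun s _ =>
    mul_le_abs_of_mem_Icc ((hSA τ le_rfl).isProbVec_stateMarginal.apply_mem_Icc s))
  have hzt : IsSA (z t) := hSA t (mem_range.1 ht).le
  rw [sub_eq_add_neg, ← neg_mul, ← abs_neg (lam t)]
  exact add_le_add (sum_le_sum fun s _ => add_le_add (mul_le_abs_of_mem_Icc (hzt.apply_mem_Icc s _))
    (mul_le_abs_of_mem_Icc (hzt.apply_mem_Icc s _))) (mul_le_abs_of_mem_Icc hzt.sum_true_mem_Icc)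

end Arm

section Joint

variable {N : ℕ} {S : Fin N → Type} [∀ n, Fintype (S n)]

/-- The trajectories of all arms over the horizon `τ`, without any budget constraint. -/
def jointTrajectories (P : ∀ n, Bool → S n → S n → ℝ) (τ : ℕ) (x : ∀ n, S n → ℝ) :
    Set (ℕ → ∀ n, S n → Bool → ℝ) :=
  {y | ∀ n, (fun t => y t n) ∈ armTrajectories (P n) τ (x n)}

/-- The objective of the finite-horizon LP. -/
noncomputable def lpObjective (r : ∀ n, S n → Bool → ℝ) (μ : ∀ n, S n → ℝ) (τ : ℕ)
    (y : ℕ → ∀ n, S n → Bool → ℝ) : ℝ :=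
  (∑ t ∈ range τ, lpReward r (y t)) + (1 / (N : ℝ)) * ∑ n, ∑ s, μ n s * stateMarginal (y τ n) s

/-- The slack of the budget constraint at time `t`, normalized by the number of arms. -/
noncomputable def budgetSlack (α : ℝ) (t : ℕ) (y : ℕ → ∀ n, S n → Bool → ℝ) : ℝ :=
  α - (1 / (N : ℝ)) * ∑ n, ∑ s, y t n s true

variable {P : ∀ n, Bool → S n → S n → ℝ} {r : ∀ n, S n → Bool → ℝ} {α : ℝ} {μ : ∀ n, S n → ℝ}
  {τ : ℕ} {x : ∀ n, S n → ℝ}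

lemma budgetSlack_nonneg_iff (hN : 1 ≤ N) {t : ℕ} {y : ℕ → ∀ n, S n → Bool → ℝ} :
    0 ≤ budgetSlack α t y ↔ BudgetFeasible α (y t) := by
  have hNpos : (0 : ℝ) < N := by exact_mod_cast hN
  rw [budgetSlack, BudgetFeasible, sub_nonneg, one_div, inv_mul_le_iff₀ hNpos]

lemma convex_jointTrajectories : Convex ℝ (jointTrajectories P τ x) :=
  fun _ hy _ hw _ _ ha hb hab n => convex_armTrajectories _ _ _ (hy n) (hw n) ha hb hab

lemma passiveTrajectory_mem_jointTrajectories (hP : ∀ n a, RowStochastic (P n a))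
    (hx : ∀ n, IsProbVec (x n)) :
    (fun t n => passiveTrajectory (P n) (x n) t) ∈ jointTrajectories P τ x :=
  fun n => passiveTrajectory_mem_armTrajectories (hP n) (hx n) τ

lemma budgetSlack_passiveTrajectory (t : ℕ) :
    budgetSlack α t (fun t n => passiveTrajectory (P n) (x n) t) = α := by
  simp [budgetSlack, passiveTrajectory_apply_true]

lemma isLinearMap_lpReward : IsLinearMap ℝ (lpReward r) where
  map_add y w := by
    simp only [lpReward, Pi.add_apply, mul_add, sum_add_distrib]
    ring
  map_smul c y := by
    simp only [lpReward, Pi.smul_apply, smul_eq_mul, mul_left_comm _ c, ← mul_add, ← mul_sum]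

lemma concaveOn_lpObjective : ConcaveOn ℝ (jointTrajectories P τ x) (lpObjective r μ τ) := by
  refine ⟨convex_jointTrajectories, fun y _ w _ a b _ _ _ => Eq.le ?_⟩
  have terminal_add_smul : ∑ n, ∑ s, μ n s * stateMarginal ((a • y + b • w) τ n) s =
      a * ∑ n, ∑ s, μ n s * stateMarginal (y τ n) s +
        b * ∑ n, ∑ s, μ n s * stateMarginal (w τ n) s := by
    simp only [Pi.add_apply, Pi.smul_apply, stateMarginal_add_smul, smul_eq_mul, mul_add,
      mul_left_comm (μ _ _), sum_add_distrib, mul_sum]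
  have stage_add_smul (t : ℕ) :
      lpReward r ((a • y + b • w) t) = a * lpReward r (y t) + b * lpReward r (w t) := by
    rw [Pi.add_apply, Pi.smul_apply, Pi.smul_apply, isLinearMap_lpReward.map_add,
      isLinearMap_lpReward.map_smul, isLinearMap_lpReward.map_smul, smul_eq_mul, smul_eq_mul]
  simp only [lpObjective, terminal_add_smul, stage_add_smul, sum_add_distrib, ← mul_sum,
    smul_eq_mul]
  ring

lemma concaveOn_budgetSlack (t : ℕ) :
    ConcaveOn ℝ (jointTrajectories P τ x) (budgetSlack α t) := by
  refine ⟨convex_jointTrajectories, fun y _ w _ a b _ _ hab => Eq.le ?_⟩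
  simp only [budgetSlack, Pi.add_apply, Pi.smul_apply, smul_eq_mul, sum_add_distrib, ← mul_sum]
  linear_combination α * hab

lemma Varm_eq_sSup_image (n : Fin N) (lam : ℕ → ℝ) :
    Varm P r μ n τ (x n) lam =
      sSup (armObjective (r n) (μ n) τ lam '' armTrajectories (P n) τ (x n)) := by
  refine congrArg sSup <| Set.ext fun v => exists_congr fun z => ?_
  simp only [armTrajectories, Set.mem_ofPred_eq, funext_iff, and_assoc, eq_comm (a := v)]
  rfl

lemma mem_jointTrajectories_iff {y : ℕ → ∀ n, S n → Bool → ℝ} :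
    y ∈ jointTrajectories P τ x ↔ (∀ t ≤ τ, ∀ n, IsSA (y t n)) ∧
      (∀ n s, y 0 n s false + y 0 n s true = x n s) ∧
      ∀ t < τ, ∀ n s', y (t + 1) n s' false + y (t + 1) n s' true = nextVec (P n) (y t n) s' :=
  ⟨fun hy => ⟨fun t ht n => (hy n).1 t ht, fun n => congrFun (hy n).2.1,
      fun t ht n => congrFun ((hy n).2.2 t ht)⟩,
    fun ⟨hSA, hinit, hflow⟩ n => ⟨fun t ht => hSA t ht n, funext (hinit n),
      fun t ht => funext (hflow t ht n)⟩⟩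

lemma Lag_eq_dualFunction (lam : ℕ → ℝ) :
    Lag P r α μ τ x lam =
      dualFunction (jointTrajectories P τ x) (lpObjective r μ τ) (budgetSlack α) (range τ) lam := by
  have lagrangian_eq (y : ℕ → ∀ n, S n → Bool → ℝ) :
      lagrangian (lpObjective r μ τ) (budgetSlack α) (range τ) lam y =
        (∑ t ∈ range τ, (lpReward r (y t) + lam t * budgetSlack α t y)) +
          (1 / (N : ℝ)) * ∑ n, ∑ s, μ n s * stateMarginal (y τ n) s := by
    rw [lagrangian, lpObjective, sum_add_distrib, add_right_comm]
  refine congrArg sSup <| Set.ext fun v => exists_congr fun y => ?_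
  rw [mem_jointTrajectories_iff, lagrangian_eq, and_assoc, and_assoc, eq_comm (b := v)]
  rfl

lemma update_passiveVec_mem_jointTrajectories {y : ℕ → ∀ n, S n → Bool → ℝ}
    (hy : y ∈ jointTrajectories P τ x) :
    Function.update y τ (fun n => passiveVec (stateMarginal (y τ n))) ∈
      jointTrajectories P τ x := by
  intro n
  convert update_passiveVec_mem_armTrajectories (hy n) using 1
  funext t
  rcases eq_or_ne t τ with rfl | ht
  · simp only [Function.update_self]
  · simp only [Function.update_of_ne ht]

lemma lpObjective_update_passiveVec (y : ℕ → ∀ n, S n → Bool → ℝ) :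
    lpObjective r μ τ (Function.update y τ fun n => passiveVec (stateMarginal (y τ n))) =
      lpObjective r μ τ y := by
  simp only [lpObjective, Function.update_self, stateMarginal_passiveVec]
  congr 1
  exact sum_congr rfl fun t ht => by rw [Function.update_of_ne (mem_range.1 ht).ne]

lemma budgetFeasible_update_passiveVec (hα : 0 ≤ α) {y : ℕ → ∀ n, S n → Bool → ℝ}
    (hy : ∀ t < τ, BudgetFeasible α (y t)) {t : ℕ} (ht : t ≤ τ) :
    BudgetFeasible α
      (Function.update y τ (fun n => passiveVec (stateMarginal (y τ n))) t) := by
  rcases ht.eq_or_lt with rfl | ht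
  · simp only [BudgetFeasible, Function.update_self, passiveVec, if_true, sum_const_zero]
    positivity
  · rw [Function.update_of_ne ht.ne]
    exact hy t ht

lemma Vfin_eq_primalValue (hN : 1 ≤ N) (hα : 0 ≤ α) :
    Vfin P r α μ τ x =
      primalValue (jointTrajectories P τ x) (lpObjective r μ τ) (budgetSlack α) (range τ) := by
  refine congrArg sSup <| Set.ext fun v => ⟨?_, ?_⟩
  · rintro ⟨y, hSA, hinit, hflow, hbudget, rfl⟩
    exact ⟨y, ⟨mem_jointTrajectories_iff.2 ⟨hSA, hinit, hflow⟩, fun t ht =>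
      (budgetSlack_nonneg_iff hN).2 (hbudget t (mem_range.1 ht).le)⟩, rfl⟩
  · rintro ⟨y, ⟨hy, hslack⟩, rfl⟩
    have hbudget (t) (ht : t < τ) : BudgetFeasible α (y t) :=
      (budgetSlack_nonneg_iff hN).1 (hslack t (mem_range.2 ht))
    obtain ⟨hSA, hinit, hflow⟩ :=
      mem_jointTrajectories_iff.1 (update_passiveVec_mem_jointTrajectories hy)
    exact ⟨_, hSA, hinit, hflow, fun t => budgetFeasible_update_passiveVec hα hbudget,
      (lpObjective_update_passiveVec y).symm⟩

lemma lagrangian_eq_add_sum_armObjective (lam : ℕ → ℝ) (y : ℕ → ∀ n, S n → Bool → ℝ) :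
    lagrangian (lpObjective r μ τ) (budgetSlack α) (range τ) lam y =
      α * ∑ t ∈ range τ, lam t +
        (1 / (N : ℝ)) * ∑ n, armObjective (r n) (μ n) τ lam (fun t => y t n) := by
  simp only [lagrangian, lpObjective, lpReward, budgetSlack, armObjective, sum_add_distrib,
    sum_sub_distrib, mul_sub, ← mul_sum, ← sum_mul, mul_left_comm (lam _) (1 / (N : ℝ))]
  simp only [sum_comm (s := univ) (t := range τ), ← mul_sum]
  ring

theorem isLUB_lagrangian_image (hP : ∀ n a, RowStochastic (P n a)) (hx : ∀ n, IsProbVec (x n))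
    (lam : ℕ → ℝ) :
    IsLUB (lagrangian (lpObjective r μ τ) (budgetSlack α) (range τ) lam '' jointTrajectories P τ x)
      (α * ∑ t ∈ range τ, lam t + (1 / (N : ℝ)) * ∑ n, Varm P r μ n τ (x n) lam) := by
  have isLUB_arm (n : Fin N) : IsLUB
      (armObjective (r n) (μ n) τ lam '' armTrajectories (P n) τ (x n))
      (Varm P r μ n τ (x n) lam) := by
    rw [Varm_eq_sSup_image]
    exact isLUB_csSup
      (Set.Nonempty.image _ ⟨_, passiveTrajectory_mem_armTrajectories (hP n) (hx n) τ⟩)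
      (bddAbove_armObjective_image _ _ _ _ _ _)
  have image_eq :
      lagrangian (lpObjective r μ τ) (budgetSlack α) (range τ) lam '' jointTrajectories P τ x =
        (fun v => α * ∑ t ∈ range τ, lam t + v) '' ((fun v => 1 / (N : ℝ) * v) ''
          ((fun z => ∑ n, armObjective (r n) (μ n) τ lam (z n)) ''
            Set.univ.pi fun n => armTrajectories (P n) τ (x n))) := by
    rw [Set.image_image, Set.image_image]
    ext v
    constructor
    · rintro ⟨y, hy, rfl⟩
      exact ⟨fun n t => y t n, fun n _ => hy n, (lagrangian_eq_add_sum_armObjective lam y).symm⟩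
    · rintro ⟨z, hz, rfl⟩
      exact ⟨fun t n => z n t, fun n => hz n trivial, lagrangian_eq_add_sum_armObjective lam _⟩
  rw [image_eq]
  exact (OrderIso.addLeft (α * ∑ t ∈ range τ, lam t)).isLUB_image'.2
    ((isLUB_image_pi_sum isLUB_arm).mul_left (one_div_nonneg.2 N.cast_nonneg))

end Joint

theorem lagrangian_decomposition_and_duality_general
    {N : ℕ} {S : Fin N → Type} [∀ n, Fintype (S n)] (hN : 1 ≤ N) {α : ℝ} (hα : 0 < α)
    {P : ∀ n, Bool → S n → S n → ℝ} (hP : ∀ n a, RowStochastic (P n a))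
    (r : ∀ n, S n → Bool → ℝ) (μ : ∀ n, S n → ℝ) (τ : ℕ)
    {x : ∀ n, S n → ℝ} (hx : ∀ n, IsProbVec (x n)) :
    (∀ lam : ℕ → ℝ, Lag P r α μ τ x lam =
      α * ∑ t ∈ range τ, lam t + (1 / (N : ℝ)) * ∑ n, Varm P r μ n τ (x n) lam) ∧
    (∀ lam : ℕ → ℝ, (∀ t < τ, 0 ≤ lam t) → Vfin P r α μ τ x ≤ Lag P r α μ τ x lam) ∧
    ConvexOn ℝ Set.univ (Lag P r α μ τ x) ∧
    ∃ lam : ℕ → ℝ, (∀ t, 0 ≤ lam t) ∧ Lag P r α μ τ x lam = Vfin P r α μ τ x := by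
  have hisLUB := isLUB_lagrangian_image (r := r) (α := α) (μ := μ) (τ := τ) hP hx
  have hpassive := passiveTrajectory_mem_jointTrajectories (τ := τ) hP hx
  have hslack (t) : 0 < budgetSlack α t fun t n => passiveTrajectory (P n) (x n) t :=
    hα.trans_eq (budgetSlack_passiveTrajectory t).symm
  have hbdd : BddAbove (lpObjective r μ τ '' jointTrajectories P τ x) := by
    simpa only [lagrangian_zero] using (hisLUB 0).bddAbove
  rw [Vfin_eq_primalValue hN hα.le, funext Lag_eq_dualFunction]
  exact ⟨fun lam => (hisLUB lam).csSup_eq (Set.Nonempty.image _ ⟨_, hpassive⟩),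
    fun lam hlam => primalValue_le_dualFunction ⟨_, hpassive, fun t _ => (hslack t).le⟩
      (hisLUB lam).bddAbove fun t ht => hlam t (mem_range.1 ht),
    convexOn_dualFunction ⟨_, hpassive⟩ fun lam => (hisLUB lam).bddAbove,
    exists_dualFunction_eq_primalValue_of_slater concaveOn_lpObjective
      (fun t _ => concaveOn_budgetSlack t) ⟨_, hpassive, fun t _ => hslack t⟩
      (hbdd.mono (Set.image_mono (Set.sep_subset _ _)))⟩

/-- decomposition of the Lagrangian, weak duality, convexity in the
multipliers, and strong duality for the finite-horizon LP. -/
theorem lagrangian_decomposition_and_duality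
    {N : ℕ} {S : Fin N → Type} [∀ n, Fintype (S n)] [∀ n, DecidableEq (S n)]
    [∀ n, Nonempty (S n)]
    (hN : 1 ≤ N) (α : ℝ) (hα0 : 0 < α) (hα1 : α ≤ 1)
    (P : ∀ n, Bool → S n → S n → ℝ) (hP : ∀ n a, RowStochastic (P n a))
    (r : ∀ n, S n → Bool → ℝ) (hr : ∀ n s a, 0 ≤ r n s a ∧ r n s a ≤ 1)
    (μ : ∀ n, S n → ℝ) (τ : ℕ) (hτ : 1 ≤ τ)
    (x : ∀ n, S n → ℝ) (hx : ∀ n, IsProbVec (x n)) :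
    (∀ lam : ℕ → ℝ, (∀ t, t < τ → 0 ≤ lam t) →
      Lag P r α μ τ x lam =
        α * (∑ t ∈ Finset.range τ, lam t) +
          (1 / (N : ℝ)) * ∑ n, Varm P r μ n τ (x n) lam) ∧
    (∀ lam : ℕ → ℝ, (∀ t, t < τ → 0 ≤ lam t) →
      Vfin P r α μ τ x ≤ Lag P r α μ τ x lam) ∧
    (∀ lam lam' : ℕ → ℝ, (∀ t, t < τ → 0 ≤ lam t) → (∀ t, t < τ → 0 ≤ lam' t) →
      ∀ η : ℝ, 0 ≤ η → η ≤ 1 →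
        Lag P r α μ τ x (fun t => η * lam t + (1 - η) * lam' t) ≤
          η * Lag P r α μ τ x lam + (1 - η) * Lag P r α μ τ x lam') ∧
    (∃ lam : ℕ → ℝ, (∀ t, t < τ → 0 ≤ lam t) ∧
      Lag P r α μ τ x lam = Vfin P r α μ τ x) := by
  obtain ⟨hdecomp, hweak, hconvex, lam, hlam, hstrong⟩ :=
    lagrangian_decomposition_and_duality_general hN hα0 hP r μ τ hx
  exact ⟨fun lam _ => hdecomp lam, hweak,
    fun lam lam' _ _ η h0 h1 => hconvex.2 trivial trivial h0 (sub_nonneg.2 h1) (add_sub_cancel η 1),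
    lam, fun t _ => hlam t, hstrong⟩
end
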